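/- Let Ω ⊆ ℝ³ be open, μ > 0 and λ ∈ ℝ constants, and let u : Ω → ℝ³, r_s : Ω → ℝ³ and ω : Ω → ℝ^{3×3} be differentiable fields. Define the Cauchy stress σ = 2μ(∇u + S*r_s) + λ(∇·u)I and assume the angular momentum balance ∇·ω = S(μ^{-1}σ) holds on Ω (divergence of matrix fields taken row-wise). Then the total rotation τ = (1/2)ω + S*u satisfies ∇·τ = 2 r_s on Ω; equivalently, with r = 2μ r_s, one has ∇·τ = μ^{-1} r. -/

import Mathlib

open Matrix

attribute [local instance] Matrix.normedAddCommGroup Matrix.normedSpace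

/-- The asymmetry operator `S : ℝ^{3×3} → ℝ³`, `S(σ)ᵢ = σ_{i-1,i+1} - σ_{i+1,i-1}`
(indices modulo 3). -/
noncomputable def Sop (σ : Matrix (Fin 3) (Fin 3) ℝ) : Fin 3 → ℝ :=
  fun i => σ (i - 1) (i + 1) - σ (i + 1) (i - 1)

/-- The adjoint `S* : ℝ³ → ℝ^{3×3}`, sending `r` to the skew matrix with rows
`(0, -r₃, r₂)`, `(r₃, 0, -r₁)`, `(-r₂, r₁, 0)`. -/
noncomputable def Sstar (r : Fin 3 → ℝ) : Matrix (Fin 3) (Fin 3) ℝ :=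
  !![0, -r 2, r 1; r 2, 0, -r 0; -r 1, r 0, 0]

/-- The Jacobian matrix `(∇u(x))_{ij} = ∂ⱼuᵢ(x)` of a vector field on `ℝ³`. -/
noncomputable def jac (u : (Fin 3 → ℝ) → (Fin 3 → ℝ)) (x : Fin 3 → ℝ) :
    Matrix (Fin 3) (Fin 3) ℝ :=
  fun i j => fderiv ℝ u x (Pi.single j 1) i

/-- The divergence `∇·u = Σᵢ ∂ᵢuᵢ` of a vector field on `ℝ³`. -/
noncomputable def divVec (u : (Fin 3 → ℝ) → (Fin 3 → ℝ)) (x : Fin 3 → ℝ) : ℝ :=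
  ∑ i, fderiv ℝ u x (Pi.single i 1) i

/-- The row-wise divergence `(∇·M)ᵢ = Σⱼ ∂ⱼ M_{ij}` of a matrix field on `ℝ³`. -/
noncomputable def divMat (M : (Fin 3 → ℝ) → Matrix (Fin 3) (Fin 3) ℝ) (x : Fin 3 → ℝ) :
    Fin 3 → ℝ :=
  fun i => ∑ j, fderiv ℝ (fun y => M y i j) x (Pi.single j 1)

/-!
Write `curl u = S(∇u)`. Since `S` kills symmetric matrices and `S (S* r) = 2 r`, the balance law
reads `∇·ω = 2 curl u + 4 r_s`; on the other hand `∇·(S* u) = -curl u`, so in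
`∇·τ = ½ ∇·ω + ∇·(S* u)` the two curls cancel.
-/

section Asymmetry

variable (A B : Matrix (Fin 3) (Fin 3) ℝ)

lemma Sop_add : Sop (A + B) = Sop A + Sop B := by
  ext i
  simp only [Sop, Matrix.add_apply, Pi.add_apply]
  ring

lemma Sop_smul (c : ℝ) : Sop (c • A) = c • Sop A := by
  ext i
  simp only [Sop, Matrix.smul_apply, Pi.smul_apply, smul_eq_mul, mul_sub]

variable {A} in
lemma Sop_eq_zero_of_isSymm (hA : A.IsSymm) : Sop A = 0 := by
  ext i
  exact sub_eq_zero.2 (hA.apply (i + 1) (i - 1))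

lemma Sop_Sstar (r : Fin 3 → ℝ) : Sop (Sstar r) = (2 : ℝ) • r := by
  ext i
  fin_cases i <;> simp [Sop, Sstar] <;> ring

end Asymmetry

lemma differentiableAt_matrix {𝕜 E F m n : Type*} [NontriviallyNormedField 𝕜]
    [NormedAddCommGroup E] [NormedSpace 𝕜 E] [NormedAddCommGroup F] [NormedSpace 𝕜 F]
    [Finite m] [Finite n] {M : E → Matrix m n F} {x : E} :
    DifferentiableAt 𝕜 M x ↔ ∀ i j, DifferentiableAt 𝕜 (fun y => M y i j) x := by
  have := Fintype.ofFinite m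
  have := Fintype.ofFinite n
  exact differentiableAt_pi.trans (forall_congr' fun _ => differentiableAt_pi)

section Divergence

variable {M N : (Fin 3 → ℝ) → Matrix (Fin 3) (Fin 3) ℝ} {u : (Fin 3 → ℝ) → (Fin 3 → ℝ)}
  {x : Fin 3 → ℝ}

lemma divMat_add (hM : DifferentiableAt ℝ M x) (hN : DifferentiableAt ℝ N x) :
    divMat (fun y => M y + N y) x = divMat M x + divMat N x := by
  ext i
  simp only [divMat, Matrix.add_apply, Pi.add_apply, ← Finset.sum_add_distrib]
  refine Finset.sum_congr rfl fun j _ => ?_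
  rw [fderiv_fun_add (differentiableAt_matrix.1 hM i j) (differentiableAt_matrix.1 hN i j),
    _root_.add_apply]

lemma divMat_const_smul (c : ℝ) : divMat (fun y => c • M y) x = c • divMat M x := by
  ext i
  simp only [divMat, Matrix.smul_apply, Pi.smul_apply, Finset.smul_sum]
  refine Finset.sum_congr rfl fun j _ => ?_
  have h : fderiv ℝ (fun y => c • M y i j) x = c • fderiv ℝ (fun y => M y i j) x :=
    congrFun (fderiv_const_smul_field (f := fun y => M y i j) c) x
  rw [h, _root_.smul_apply]

lemma differentiableAt_Sstar (hu : DifferentiableAt ℝ u x) :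
    DifferentiableAt ℝ (fun y => Sstar (u y)) x := by
  have h := differentiableAt_pi.1 hu
  refine differentiableAt_matrix.2 fun i j => ?_
  fin_cases i <;> fin_cases j <;> simp [Sstar, h]

lemma jac_apply (hu : DifferentiableAt ℝ u x) (i j : Fin 3) :
    jac u x i j = fderiv ℝ (fun y => u y i) x (Pi.single j 1) := by
  rw [fderiv_apply hu i]
  rfl

lemma divMat_Sstar (hu : DifferentiableAt ℝ u x) :
    divMat (fun y => Sstar (u y)) x = -Sop (jac u x) := by
  have hneg : (-1 : Fin 3) = 2 := rfl
  ext i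
  fin_cases i <;>
    simp [divMat, Sstar, Sop, hneg, Fin.sum_univ_three, fderiv_fun_neg, jac_apply hu] <;>
    ring

end Divergence

theorem div_total_rotation_general {μ : ℝ} (hμ : μ ≠ 0) {u : (Fin 3 → ℝ) → (Fin 3 → ℝ)}
    {ω : (Fin 3 → ℝ) → Matrix (Fin 3) (Fin 3) ℝ} {x r : Fin 3 → ℝ}
    {σ P : Matrix (Fin 3) (Fin 3) ℝ}
    (hu : DifferentiableAt ℝ u x) (hω : DifferentiableAt ℝ ω x) (hP : P.IsSymm)
    (hσ : σ = (2 * μ) • (jac u x + Sstar r) + P)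
    (hbal : divMat ω x = Sop ((1 / μ) • σ)) :
    divMat (fun y => (1 / 2 : ℝ) • ω y + Sstar (u y)) x = (2 : ℝ) • r := by
  have hcouple : Sop ((1 / μ) • σ) = (2 : ℝ) • (Sop (jac u x) + (2 : ℝ) • r) := by
    rw [hσ, Sop_smul, Sop_add, Sop_eq_zero_of_isSymm hP, add_zero, Sop_smul, Sop_add,
      Sop_Sstar, smul_smul]
    congr 1
    field_simp
  calc divMat (fun y => (1 / 2 : ℝ) • ω y + Sstar (u y)) x
      = (1 / 2 : ℝ) • divMat ω x + divMat (fun y => Sstar (u y)) x := by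
        rw [divMat_add (hω.fun_const_smul _) (differentiableAt_Sstar hu), divMat_const_smul]
    _ = (1 / 2 : ℝ) • (2 : ℝ) • (Sop (jac u x) + (2 : ℝ) • r) - Sop (jac u x) := by
        rw [hbal, hcouple, divMat_Sstar hu, sub_eq_add_neg]
    _ = (2 : ℝ) • r := by module

/-- Let `Ω ⊆ ℝ³` be open, `μ > 0`, `λ ∈ ℝ`, and let `u`, `r_s`, `ω` be differentiable
fields on `Ω`.  With the Cauchy stress `σ = 2μ(∇u + S*r_s) + λ(∇·u)I` and the angular
momentum balance `∇·ω = S(μ⁻¹σ)` on `Ω`, the total rotation `τ = (1/2)ω + S*u`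
satisfies `∇·τ = 2 r_s` on `Ω`; equivalently, with `r = 2μ r_s`, `∇·τ = μ⁻¹ r`. -/
theorem div_total_rotation (Ω : Set (Fin 3 → ℝ)) (hΩ : IsOpen Ω) (μ lam : ℝ) (hμ : 0 < μ)
    (u rs : (Fin 3 → ℝ) → (Fin 3 → ℝ)) (ω : (Fin 3 → ℝ) → Matrix (Fin 3) (Fin 3) ℝ)
    (hu : ∀ x ∈ Ω, DifferentiableAt ℝ u x)
    (hrs : ∀ x ∈ Ω, DifferentiableAt ℝ rs x)
    (hω : ∀ x ∈ Ω, DifferentiableAt ℝ ω x)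
    (σ : (Fin 3 → ℝ) → Matrix (Fin 3) (Fin 3) ℝ)
    (hσ : ∀ x ∈ Ω, σ x = (2 * μ) • (jac u x + Sstar (rs x)) +
      (lam * divVec u x) • (1 : Matrix (Fin 3) (Fin 3) ℝ))
    (hbal : ∀ x ∈ Ω, divMat ω x = Sop ((1 / μ) • σ x)) :
    ∀ x ∈ Ω,
      divMat (fun y => (1 / 2 : ℝ) • ω y + Sstar (u y)) x = (2 : ℝ) • rs x ∧
      divMat (fun y => (1 / 2 : ℝ) • ω y + Sstar (u y)) x = (1 / μ) • ((2 * μ) • rs x) := by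
  intro x hx
  have hdiv := div_total_rotation_general hμ.ne' (hu x hx) (hω x hx)
    (isSymm_one.smul (lam * divVec u x)) (hσ x hx) (hbal x hx)
  exact ⟨hdiv, by rw [hdiv, smul_smul, one_div_mul_eq_div, mul_div_cancel_right₀ _ hμ.ne']⟩
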